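/- Let K be an abstract simplicial complex of dimension i that is pure, orientable, connected (any two i-faces are joined by a path of consecutively connected i-faces), in which every (i−1)-face is contained in exactly two i-faces, with weights w(F) = 1 for every i-face F and w(E) = deg E = 2 for every (i−1)-face E. If κ(F, F') ≥ k for every pair of connected i-faces F ~ F' and some real number k, then every non-zero eigenvalue λ of the i-down Laplacian Δ_i^down satisfies λ ≥ (i+1)·k. -/

import Mathlib

/-!
Since every `(i-1)`-face lies in exactly two `i`-faces, the connectedness relation makes the
`i`-faces into an `(i+1)`-regular graph, `m_F^ε` is a lazy simple random walk step on it, and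
averaging against `m_F^ε` is the operator `1 - ε / (i+1) · Δ` with `Δ` the down Laplacian
(`sum_pm_mul_eq`). Let `f` be an eigenfunction for `λ ≠ 0`, and let `F ~ F'` maximise
`f F - f F'` over connected pairs, with maximum `L`. Then `L > 0`, because `Δ f ≠ 0`, and `f` is
`L`-Lipschitz for the path distance. Testing any coupling of `m_F^ε` and `m_{F'}^ε` against `f`
(the easy half of Kantorovich duality) gives `(1 - ε λ / (i+1)) L ≤ L · W`, that is
`κ_ε(F, F') / ε ≤ λ / (i+1)`.

Passing to `κ` needs the limit to exist. Mixing a coupling for `m^δ` with the point mass at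
`(F, F')` shows `W(m^{tδ}) ≤ (1 - t) + t W(m^δ)` (`wass_mul_le`), so `κ_ε / ε` is antitone in `ε`;
being bounded above by `λ / (i+1)`, it converges as `ε → 0+`, to a limit at most `λ / (i+1)`.
-/

open Finset Filter

namespace SCRicci

variable {V : Type*}

/-- `K` is an abstract simplicial complex: faces are nonempty finite sets and
nonempty subsets of faces are again faces. -/
def IsComplex [DecidableEq V] (K : Finset (Finset V)) : Prop :=
  ∀ F ∈ K, F.Nonempty ∧ ∀ E : Finset V, E ⊆ F → E.Nonempty → E ∈ K

/-- The set `S_i(K)` of `i`-faces of `K` (faces of cardinality `i+1`). -/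
def faces [DecidableEq V] (K : Finset (Finset V)) (i : ℕ) : Finset (Finset V) :=
  K.filter fun F => F.card = i + 1

/-- Two `i`-faces are connected, `F ~ F'`, if they are distinct and share a common
`(i-1)`-face, which is necessarily `F ∩ F'`. -/
def Conn [DecidableEq V] (i : ℕ) (F F' : Finset V) : Prop :=
  F ≠ F' ∧ (F ∩ F').card = i

noncomputable section

/-- The degree of an `(i-1)`-face `E`: the sum of the weights of the `i`-faces
containing `E`. -/
def deg [DecidableEq V] (K : Finset (Finset V)) (w : Finset V → ℝ) (i : ℕ)
    (E : Finset V) : ℝ :=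
  ∑ F ∈ faces K i, if E ⊆ F then w F else 0

/-- `Chain K i n F F'`: there is a path of length `n` of consecutively connected
`i`-faces from `F` to `F'`. -/
def Chain [DecidableEq V] (K : Finset (Finset V)) (i : ℕ) :
    ℕ → Finset V → Finset V → Prop
  | 0, F, F' => F = F'
  | n + 1, F, F' => ∃ G ∈ faces K i, Conn i F G ∧ Chain K i n G F'

/-- The distance between two `i`-faces: the length of a shortest path of
consecutively connected `i`-faces. -/
def fdist [DecidableEq V] (K : Finset (Finset V)) (i : ℕ) (F F' : Finset V) : ℕ :=
  sInf {n | Chain K i n F F'}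

/-- `K` is connected in dimension `i`: any two `i`-faces are joined by a path of
consecutively connected `i`-faces. -/
def ComplexConnected [DecidableEq V] (K : Finset (Finset V)) (i : ℕ) : Prop :=
  ∀ F ∈ faces K i, ∀ F' ∈ faces K i, ∃ n, Chain K i n F F'

/-- The probability measure `m_F^ε` on the `i`-faces of `K`. -/
def pm [DecidableEq V] (K : Finset (Finset V)) (w : Finset V → ℝ) (i : ℕ) (ε : ℝ)
    (F F' : Finset V) : ℝ :=
  if F' = F then
    1 - ε + ε / ((i : ℝ) + 1) * ∑ E ∈ F.powersetCard i, w F / deg K w i E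
  else if F' ∈ faces K i ∧ (F ∩ F').card = i then
    ε * w F' / (((i : ℝ) + 1) * deg K w i (F ∩ F'))
  else 0

/-- The 1-Wasserstein distance between two measures on the `i`-faces of `K`:
the infimum of the transport cost over all couplings. -/
def Wass [DecidableEq V] (K : Finset (Finset V)) (i : ℕ) (μ ν : Finset V → ℝ) : ℝ :=
  sInf {c : ℝ | ∃ A : Finset V → Finset V → ℝ,
    (∀ F₁ F₂, 0 ≤ A F₁ F₂) ∧
    (∀ F₁ ∈ faces K i, ∑ F₂ ∈ faces K i, A F₁ F₂ = μ F₁) ∧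
    (∀ F₂ ∈ faces K i, ∑ F₁ ∈ faces K i, A F₁ F₂ = ν F₂) ∧
    c = ∑ F₁ ∈ faces K i, ∑ F₂ ∈ faces K i, A F₁ F₂ * (fdist K i F₁ F₂ : ℝ)}

/-- The `ε`-Ricci curvature of two distinct `i`-faces:
`κ_ε(F, F') = 1 - W(m_F^ε, m_{F'}^ε) / d(F, F')`. -/
def kappaEps [DecidableEq V] (K : Finset (Finset V)) (w : Finset V → ℝ) (i : ℕ)
    (ε : ℝ) (F F' : Finset V) : ℝ :=
  1 - Wass K i (pm K w i ε F) (pm K w i ε F') / (fdist K i F F' : ℝ)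

/-- The Ricci curvature `κ(F, F')`: the limit of `κ_ε(F, F') / ε` as `ε → 0+`. -/
def ricci [DecidableEq V] (K : Finset (Finset V)) (w : Finset V → ℝ) (i : ℕ)
    (F F' : Finset V) : ℝ :=
  limUnder (nhdsWithin (0 : ℝ) (Set.Ioi 0)) fun ε => kappaEps K w i ε F F' / ε

/-- The `i`-down Laplacian `Δ_i^down` for the weights `w(F) = 1` on `i`-faces and
`w(E) = deg E` on `(i-1)`-faces:
`(Δ_i^down f)(F) = Σ_{E ∈ ∂F} (1 / deg E) · (f F - Σ_{F' ∈ S_i, F' ≠ F, E ⊆ F'} f F')`. -/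
def lapDown [DecidableEq V] (K : Finset (Finset V)) (w : Finset V → ℝ) (i : ℕ)
    (f : Finset V → ℝ) (F : Finset V) : ℝ :=
  ∑ E ∈ F.powersetCard i, (1 / deg K w i E) *
    (f F - ∑ F' ∈ (faces K i).filter (fun F' => F' ≠ F ∧ E ⊆ F'), f F')

/-- `K` is pure of dimension `i`: every face is contained in an `i`-face and
there are no faces of dimension larger than `i` (so every facet has dimension `i`). -/
def IsPure [DecidableEq V] (K : Finset (Finset V)) (i : ℕ) : Prop :=
  (∀ F ∈ K, F.card ≤ i + 1) ∧ ∀ F ∈ K, ∃ G ∈ K, F ⊆ G ∧ G.card = i + 1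

/-- The sign of the `(i-1)`-face `E` inside the boundary of the `i`-face `F`, both
taken with the orientation induced by the linear order on the vertices: it is
`(-1)^j` where `j` is the position in `F` of the vertex removed from `F` to get `E`. -/
def sgnBd [LinearOrder V] (F E : Finset V) : ℤ :=
  ∏ v ∈ F \ E, (-1 : ℤ) ^ (F.filter fun u => u < v).card

/-- `K` is orientable in dimension `i`: the `i`-faces can be oriented (recorded by a
sign `o F = ±1` relative to the orientation induced by the linear order on the
vertices) in such a way that any two connected `i`-faces induce opposite
orientations on their common `(i-1)`-face. -/
def Orientable [LinearOrder V] (K : Finset (Finset V)) (i : ℕ) : Prop :=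
  ∃ o : Finset V → ℤ, (∀ F ∈ faces K i, o F = 1 ∨ o F = -1) ∧
    ∀ F ∈ faces K i, ∀ F' ∈ faces K i, Conn i F F' →
      o F * o F' * sgnBd F (F ∩ F') * sgnBd F' (F ∩ F') = -1

/-! ### The regular graph of `i`-faces -/

/-- The `i`-faces of `K` connected to `F`. -/
def nbrs [DecidableEq V] (K : Finset (Finset V)) (i : ℕ) (F : Finset V) :
    Finset (Finset V) :=
  (faces K i).filter fun G => G ≠ F ∧ (F ∩ G).card = i

lemma Conn.symm [DecidableEq V] {i : ℕ} {F G : Finset V} (h : Conn i F G) : Conn i G F :=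
  ⟨h.1.symm, by rw [inter_comm]; exact h.2⟩

lemma mem_nbrs [DecidableEq V] {K : Finset (Finset V)} {i : ℕ} {F G : Finset V} :
    G ∈ nbrs K i F ↔ G ∈ faces K i ∧ Conn i F G := by
  simp [nbrs, Conn, ne_comm]

lemma mem_faces_pred [DecidableEq V] {K : Finset (Finset V)} {i : ℕ} (hi : 1 ≤ i)
    (hK : IsComplex K) {F E : Finset V} (hF : F ∈ faces K i) (hE : E ∈ F.powersetCard i) :
    E ∈ faces K (i - 1) := by
  simp only [faces, mem_filter, mem_powersetCard] at *
  refine ⟨(hK F hF.1).2 E hE.1 (card_pos.1 (by omega)), by omega⟩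

/-- Summing over the other `i`-faces through each boundary face `E` of `F` meets each neighbour
of `F` exactly once, through `E = F ∩ G`. -/
lemma sum_boundary_eq_sum_nbrs [DecidableEq V] {K : Finset (Finset V)} {i : ℕ}
    {F : Finset V} (hF : F ∈ faces K i) (h : Finset V → ℝ) :
    ∑ E ∈ F.powersetCard i, ∑ G ∈ (faces K i).filter (fun G => G ≠ F ∧ E ⊆ G), h G
      = ∑ G ∈ nbrs K i F, h G := by
  have hswap : ∑ E ∈ F.powersetCard i,
      ∑ G ∈ (faces K i).filter (fun G => G ≠ F ∧ E ⊆ G), h G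
      = ∑ G ∈ (faces K i).filter (fun G => G ≠ F), ∑ _E ∈ (F ∩ G).powersetCard i, h G := by
    apply sum_comm'
    intro E G
    simp only [mem_filter, mem_powersetCard, subset_inter_iff]
    tauto
  rw [hswap, nbrs, ← filter_filter, sum_filter (fun G => (F ∩ G).card = i)]
  refine sum_congr rfl fun G hG => ?_
  simp only [mem_filter, faces] at hG hF
  have hlt : (F ∩ G).card < i + 1 := by
    rw [← hF.2]
    refine card_lt_card (ssubset_of_subset_of_ne inter_subset_left fun he => hG.2 ?_)
    exact (eq_of_subset_of_card_le (inter_eq_left.1 he) (by omega)).symm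
  rw [sum_const, card_powersetCard]
  split_ifs with hc
  · simp [hc]
  · rw [Nat.choose_eq_zero_of_lt (by omega)]; simp

lemma card_nbrs [DecidableEq V] {K : Finset (Finset V)} {i : ℕ} (hi : 1 ≤ i)
    (hK : IsComplex K)
    (h2 : ∀ E ∈ faces K (i - 1), ((faces K i).filter fun F => E ⊆ F).card = 2)
    {F : Finset V} (hF : F ∈ faces K i) : ((nbrs K i F).card : ℝ) = i + 1 := by
  have h := sum_boundary_eq_sum_nbrs hF (fun _ => (1 : ℝ))
  have hone : ∀ E ∈ F.powersetCard i,
      ∑ _G ∈ (faces K i).filter (fun G => G ≠ F ∧ E ⊆ G), (1 : ℝ) = 1 := by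
    intro E hE
    have he : (faces K i).filter (fun G => G ≠ F ∧ E ⊆ G)
        = ((faces K i).filter fun G => E ⊆ G).erase F := by
      ext G; simp only [mem_filter, mem_erase]; tauto
    rw [he, sum_const, card_erase_of_mem, h2 E (mem_faces_pred hi hK hF hE)]
    · simp
    · exact mem_filter.2 ⟨hF, (mem_powersetCard.1 hE).1⟩
  rw [sum_congr rfl hone] at h
  have hc : F.card = i + 1 := (mem_filter.1 hF).2
  simp [hc] at h
  exact h.symm

/-- The down Laplacian is half the graph Laplacian of the `(i+1)`-regular graph of `i`-faces. -/
lemma lapDown_eq [DecidableEq V] {K : Finset (Finset V)} {i : ℕ} (hi : 1 ≤ i)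
    (hK : IsComplex K) {w : Finset V → ℝ} (hdeg2 : ∀ E ∈ faces K (i - 1), deg K w i E = 2)
    {F : Finset V} (hF : F ∈ faces K i) (f : Finset V → ℝ) :
    lapDown K w i f F = (1 / 2) * (((i : ℝ) + 1) * f F - ∑ G ∈ nbrs K i F, f G) := by
  have hc : F.card = i + 1 := (mem_filter.1 hF).2
  have h1 : lapDown K w i f F = ∑ E ∈ F.powersetCard i, (1 / 2 : ℝ) *
      (f F - ∑ G ∈ (faces K i).filter (fun G => G ≠ F ∧ E ⊆ G), f G) :=
    sum_congr rfl fun E hE => by rw [hdeg2 E (mem_faces_pred hi hK hF hE)]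
  rw [h1, ← mul_sum, sum_sub_distrib, sum_boundary_eq_sum_nbrs hF]
  simp [hc]

/-! ### The measures `m_F^ε` -/

/-- The measures `m_F^ε` are affine in `ε`. -/
lemma pm_affine [DecidableEq V] (K : Finset (Finset V)) (w : Finset V → ℝ) (i : ℕ)
    (t δ : ℝ) (F G : Finset V) :
    pm K w i (t * δ) F G = (1 - t) * (if G = F then 1 else 0) + t * pm K w i δ F G := by
  unfold pm
  split_ifs <;> ring

/-- The lazy random walk form of `m_F^ε`. -/
lemma pm_eq [DecidableEq V] {K : Finset (Finset V)} {i : ℕ} (hi : 1 ≤ i)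
    (hK : IsComplex K) {w : Finset V → ℝ} (hw1 : ∀ F ∈ faces K i, w F = 1)
    (hdeg2 : ∀ E ∈ faces K (i - 1), deg K w i E = 2) (ε : ℝ)
    {F : Finset V} (hF : F ∈ faces K i) (G : Finset V) :
    pm K w i ε F G = (if G = F then 1 - ε / 2 else 0)
      + (if G ∈ nbrs K i F then ε / (2 * ((i : ℝ) + 1)) else 0) := by
  have hc : F.card = i + 1 := (mem_filter.1 hF).2
  have hi0 : (i : ℝ) + 1 ≠ 0 := by positivity
  unfold pm
  by_cases hG : G = F
  · subst hG
    have hs : ∑ E ∈ G.powersetCard i, w G / deg K w i E = ((i : ℝ) + 1) / 2 := by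
      have h1 : ∀ E ∈ G.powersetCard i, w G / deg K w i E = 1 / 2 := fun E hE => by
        rw [hw1 G hF, hdeg2 E (mem_faces_pred hi hK hF hE)]
      rw [sum_congr rfl h1]
      simp [hc]
      ring
    rw [hs]
    simp [nbrs]
    field_simp
    ring
  · by_cases hN : G ∈ faces K i ∧ (F ∩ G).card = i
    · have hE : F ∩ G ∈ F.powersetCard i := mem_powersetCard.2 ⟨inter_subset_left, hN.2⟩
      simp [hG, hN, nbrs, hw1 G hN.1, hdeg2 _ (mem_faces_pred hi hK hF hE), mul_comm]
    · have hN' : G ∉ nbrs K i F := fun h => hN ⟨(mem_filter.1 h).1, (mem_filter.1 h).2.2⟩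
      simp [hG, hN, hN']

lemma sum_pm_mul [DecidableEq V] {K : Finset (Finset V)} {i : ℕ} (hi : 1 ≤ i)
    (hK : IsComplex K) {w : Finset V → ℝ} (hw1 : ∀ F ∈ faces K i, w F = 1)
    (hdeg2 : ∀ E ∈ faces K (i - 1), deg K w i E = 2) (ε : ℝ)
    {F : Finset V} (hF : F ∈ faces K i) (f : Finset V → ℝ) :
    ∑ G ∈ faces K i, pm K w i ε F G * f G
      = (1 - ε / 2) * f F + ε / (2 * ((i : ℝ) + 1)) * ∑ G ∈ nbrs K i F, f G := by
  have hsub : (faces K i).filter (fun G => G ∈ nbrs K i F) = nbrs K i F := by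
    ext G; simp only [mem_filter]; exact ⟨fun h => h.2, fun h => ⟨(mem_filter.1 h).1, h⟩⟩
  simp only [pm_eq hi hK hw1 hdeg2 ε hF, add_mul, sum_add_distrib, ite_mul, zero_mul]
  rw [← sum_filter (fun G => G ∈ nbrs K i F), hsub, mul_sum]
  simp [hF]

/-- Averaging against `m_F^ε` is the operator `1 - ε / (i+1) · Δ`. -/
lemma sum_pm_mul_eq [DecidableEq V] {K : Finset (Finset V)} {i : ℕ} (hi : 1 ≤ i)
    (hK : IsComplex K) {w : Finset V → ℝ} (hw1 : ∀ F ∈ faces K i, w F = 1)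
    (hdeg2 : ∀ E ∈ faces K (i - 1), deg K w i E = 2) (ε : ℝ)
    {F : Finset V} (hF : F ∈ faces K i) (f : Finset V → ℝ) :
    ∑ G ∈ faces K i, pm K w i ε F G * f G
      = f F - ε / ((i : ℝ) + 1) * lapDown K w i f F := by
  have hi0 : (i : ℝ) + 1 ≠ 0 := by positivity
  rw [sum_pm_mul hi hK hw1 hdeg2 ε hF, lapDown_eq hi hK hdeg2 hF]
  field_simp
  ring

lemma sum_pm [DecidableEq V] {K : Finset (Finset V)} {i : ℕ} (hi : 1 ≤ i)
    (hK : IsComplex K)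
    (h2 : ∀ E ∈ faces K (i - 1), ((faces K i).filter fun F => E ⊆ F).card = 2)
    {w : Finset V → ℝ} (hw1 : ∀ F ∈ faces K i, w F = 1)
    (hdeg2 : ∀ E ∈ faces K (i - 1), deg K w i E = 2) (ε : ℝ)
    {F : Finset V} (hF : F ∈ faces K i) :
    ∑ G ∈ faces K i, pm K w i ε F G = 1 := by
  have hi0 : (i : ℝ) + 1 ≠ 0 := by positivity
  have h := sum_pm_mul hi hK hw1 hdeg2 ε hF (fun _ => 1)
  simp only [mul_one, sum_const, nsmul_eq_mul, card_nbrs hi hK h2 hF] at h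
  rw [h]
  field_simp
  ring

lemma pm_nonneg [DecidableEq V] {K : Finset (Finset V)} {i : ℕ} (hi : 1 ≤ i)
    (hK : IsComplex K) {w : Finset V → ℝ} (hw1 : ∀ F ∈ faces K i, w F = 1)
    (hdeg2 : ∀ E ∈ faces K (i - 1), deg K w i E = 2) {ε : ℝ} (h0 : 0 ≤ ε) (h1 : ε ≤ 1)
    {F : Finset V} (hF : F ∈ faces K i) (G : Finset V) : 0 ≤ pm K w i ε F G := by
  rw [pm_eq hi hK hw1 hdeg2 ε hF]
  have : 0 ≤ 1 - ε / 2 := by linarith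
  positivity

/-! ### Couplings and convexity of the Wasserstein distance -/

/-- The set of transport costs, whose infimum is `Wass`. -/
def costs [DecidableEq V] (K : Finset (Finset V)) (i : ℕ) (μ ν : Finset V → ℝ) : Set ℝ :=
  {c : ℝ | ∃ A : Finset V → Finset V → ℝ,
    (∀ F₁ F₂, 0 ≤ A F₁ F₂) ∧
    (∀ F₁ ∈ faces K i, ∑ F₂ ∈ faces K i, A F₁ F₂ = μ F₁) ∧
    (∀ F₂ ∈ faces K i, ∑ F₁ ∈ faces K i, A F₁ F₂ = ν F₂) ∧
    c = ∑ F₁ ∈ faces K i, ∑ F₂ ∈ faces K i, A F₁ F₂ * (fdist K i F₁ F₂ : ℝ)}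

lemma costs_bddBelow [DecidableEq V] (K : Finset (Finset V)) (i : ℕ) (μ ν : Finset V → ℝ) :
    BddBelow (costs K i μ ν) := by
  refine ⟨0, ?_⟩
  rintro c ⟨A, hA, -, -, rfl⟩
  exact sum_nonneg fun F _ => sum_nonneg fun G _ => mul_nonneg (hA F G) (Nat.cast_nonneg _)

/-- The product coupling. -/
lemma costs_nonempty [DecidableEq V] {K : Finset (Finset V)} {i : ℕ} {μ ν : Finset V → ℝ}
    (hμ : ∀ F, 0 ≤ μ F) (hν : ∀ F, 0 ≤ ν F)
    (hμ1 : ∑ F ∈ faces K i, μ F = 1) (hν1 : ∑ F ∈ faces K i, ν F = 1) :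
    (costs K i μ ν).Nonempty := by
  refine ⟨_, fun F G => μ F * ν G, fun F G => mul_nonneg (hμ F) (hν G), ?_, ?_, rfl⟩
  · intro F _
    rw [← mul_sum, hν1, mul_one]
  · intro G _
    rw [← sum_mul, hμ1, one_mul]

/-- Convexity of the Wasserstein distance along `ε ↦ (m_F^ε, m_{F'}^ε)`, between `0` and `δ`. -/
lemma wass_mul_le [DecidableEq V] {K : Finset (Finset V)} {i : ℕ} {w : Finset V → ℝ}
    {F F' : Finset V} (hF : F ∈ faces K i) (hF' : F' ∈ faces K i) {t δ : ℝ}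
    (ht0 : 0 ≤ t) (ht1 : t ≤ 1)
    (hne : (costs K i (pm K w i δ F) (pm K w i δ F')).Nonempty) :
    Wass K i (pm K w i (t * δ) F) (pm K w i (t * δ) F')
      ≤ (1 - t) * (fdist K i F F' : ℝ) + t * Wass K i (pm K w i δ F) (pm K w i δ F') := by
  have key : ∀ c ∈ costs K i (pm K w i δ F) (pm K w i δ F'),
      Wass K i (pm K w i (t * δ) F) (pm K w i (t * δ) F')
        ≤ (1 - t) * (fdist K i F F' : ℝ) + t * c := by
    rintro c ⟨A, hA, hA1, hA2, rfl⟩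
    refine csInf_le (costs_bddBelow K i _ _)
      ⟨fun G H => (1 - t) * ((if G = F then 1 else 0) * (if H = F' then 1 else 0)) + t * A G H,
        ?_, ?_, ?_, ?_⟩
    · intro G H
      have h1 : 0 ≤ 1 - t := by linarith
      have := hA G H
      positivity
    · intro G hG
      rw [sum_add_distrib, ← mul_sum, ← mul_sum, ← mul_sum, hA1 G hG, pm_affine]
      simp [hF']
    · intro H hH
      rw [sum_add_distrib, ← mul_sum, ← mul_sum, ← sum_mul, hA2 H hH, pm_affine]
      simp [hF]
    · simp only [add_mul, sum_add_distrib, mul_assoc, ← mul_sum]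
      simp [hF, hF']
  rcases ht0.eq_or_lt with rfl | ht
  · obtain ⟨c, hc⟩ := hne
    simpa using key c hc
  · have h : (Wass K i (pm K w i (t * δ) F) (pm K w i (t * δ) F')
        - (1 - t) * (fdist K i F F' : ℝ)) / t ≤ Wass K i (pm K w i δ F) (pm K w i δ F') := by
      refine le_csInf hne fun c hc => ?_
      rw [div_le_iff₀ ht]
      linarith [key c hc]
    rw [div_le_iff₀ ht] at h
    linarith

/-! ### Lipschitz functions and Kantorovich duality -/

lemma fdist_of_conn [DecidableEq V] {K : Finset (Finset V)} {i : ℕ} {F F' : Finset V}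
    (hF' : F' ∈ faces K i) (h : Conn i F F') : fdist K i F F' = 1 := by
  have hmem : 1 ∈ {n | Chain K i n F F'} := ⟨F', hF', h, rfl⟩
  have hle : fdist K i F F' ≤ 1 := Nat.sInf_le hmem
  have hne : fdist K i F F' ≠ 0 := by
    intro h0
    have hm : Chain K i (fdist K i F F') F F' := Nat.sInf_mem ⟨1, hmem⟩
    rw [h0] at hm
    exact h.1 hm
  omega

lemma sub_le_of_chain [DecidableEq V] {K : Finset (Finset V)} {i : ℕ} {f : Finset V → ℝ}
    {L : ℝ} (hL : ∀ F ∈ faces K i, ∀ G ∈ faces K i, Conn i F G → f F - f G ≤ L) (n : ℕ) :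
    ∀ F ∈ faces K i, ∀ G, Chain K i n F G → f F - f G ≤ L * n := by
  induction n with
  | zero =>
    rintro F _ G rfl
    simp
  | succ n ih =>
    rintro F hF G ⟨H, hH, hFH, hc⟩
    have h1 := hL F hF H hH hFH
    have h2 := ih H hH G hc
    push_cast
    linarith

/-- The easy half of Kantorovich duality: an `L`-Lipschitz function bounds the Wasserstein
distance from below. -/
lemma sub_le_mul_wass [DecidableEq V] {K : Finset (Finset V)} {i : ℕ} {f μ ν : Finset V → ℝ}
    {L : ℝ} (hLpos : 0 < L)
    (hLip : ∀ F ∈ faces K i, ∀ G ∈ faces K i, f F - f G ≤ L * (fdist K i F G : ℝ))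
    (hne : (costs K i μ ν).Nonempty) :
    (∑ G ∈ faces K i, μ G * f G) - ∑ G ∈ faces K i, ν G * f G ≤ L * Wass K i μ ν := by
  rw [← div_le_iff₀' hLpos]
  refine le_csInf hne ?_
  rintro c ⟨A, hA, hA1, hA2, rfl⟩
  rw [div_le_iff₀' hLpos]
  have e1 : ∑ G ∈ faces K i, μ G * f G = ∑ G ∈ faces K i, ∑ H ∈ faces K i, A G H * f G :=
    sum_congr rfl fun G hG => by rw [← hA1 G hG, sum_mul]
  have e2 : ∑ H ∈ faces K i, ν H * f H = ∑ G ∈ faces K i, ∑ H ∈ faces K i, A G H * f H := by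
    rw [sum_comm]
    exact sum_congr rfl fun H hH => by rw [← hA2 H hH, sum_mul]
  rw [e1, e2, ← sum_sub_distrib, mul_sum]
  refine sum_le_sum fun G hG => ?_
  rw [← sum_sub_distrib, mul_sum]
  refine sum_le_sum fun H hH => ?_
  nlinarith [mul_le_mul_of_nonneg_left (hLip G hG H hH) (hA G H)]

/-! ### The eigenvalue bound -/

/-- For an orientable, pure, connected `i`-dimensional simplicial
complex in which every `(i-1)`-face lies in exactly two `i`-faces, with weights
`w(F) = 1` on `i`-faces and `w(E) = deg E = 2` on `(i-1)`-faces, if `κ ≥ k` on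
connected `i`-faces then every non-zero eigenvalue `λ` of `Δ_i^down` satisfies
`λ ≥ (i+1)·k`. -/
theorem eigenvalue_lower_bound_regular {V : Type*} [Fintype V] [LinearOrder V]
    (K : Finset (Finset V)) (i : ℕ) (hi : 1 ≤ i)
    (hK : IsComplex K) (hpure : IsPure K i) (hor : Orientable K i)
    (hconn : ComplexConnected K i)
    (h2 : ∀ E ∈ faces K (i - 1), ((faces K i).filter fun F => E ⊆ F).card = 2)
    (w : Finset V → ℝ) (hwpos : ∀ F ∈ K, 0 < w F)
    (hw1 : ∀ F ∈ faces K i, w F = 1)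
    (hw2 : ∀ E ∈ faces K (i - 1), w E = 2)
    (hdeg2 : ∀ E ∈ faces K (i - 1), deg K w i E = 2)
    (k : ℝ)
    (hk : ∀ F ∈ faces K i, ∀ F' ∈ faces K i, Conn i F F' → k ≤ ricci K w i F F')
    (lam : ℝ)
    (hlam : ∃ f : Finset V → ℝ, (∃ F ∈ faces K i, f F ≠ 0) ∧
      ∀ F ∈ faces K i, lapDown K w i f F = lam * f F)
    (hlam0 : lam ≠ 0) :
    ((i : ℝ) + 1) * k ≤ lam := by
  obtain ⟨f, ⟨F₀, hF₀, hf₀⟩, hf⟩ := hlam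
  have hi0 : (0 : ℝ) < (i : ℝ) + 1 := by positivity
  -- Some connected pair has `f` different on its two ends, since `Δ f ≠ 0` at `F₀`.
  obtain ⟨G₀, hG₀, hne₀⟩ : ∃ G ∈ nbrs K i F₀, f G ≠ f F₀ := by
    by_contra! hall
    have h := hf F₀ hF₀
    rw [lapDown_eq hi hK hdeg2 hF₀, sum_congr rfl hall, sum_const, nsmul_eq_mul,
      card_nbrs hi hK h2 hF₀, sub_self, mul_zero] at h
    exact mul_ne_zero hlam0 hf₀ h.symm
  obtain ⟨hG₀f, hFG₀⟩ := mem_nbrs.1 hG₀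
  set P := (faces K i).sigma fun F => nbrs K i F with hP
  obtain ⟨⟨F, F'⟩, hFF', hmax⟩ := P.exists_max_image (fun p => f p.1 - f p.2)
    ⟨⟨F₀, G₀⟩, mem_sigma.2 ⟨hF₀, hG₀⟩⟩
  obtain ⟨hF, hN⟩ := mem_sigma.1 hFF'
  obtain ⟨hF', hC⟩ := mem_nbrs.1 hN
  set L := f F - f F' with hLdef
  have hL : ∀ G ∈ faces K i, ∀ H ∈ faces K i, Conn i G H → f G - f H ≤ L :=
    fun G hG H hH hGH => hmax ⟨G, H⟩ (mem_sigma.2 ⟨hG, mem_nbrs.2 ⟨hH, hGH⟩⟩)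
  have hLpos : 0 < L := by
    have a := hL F₀ hF₀ G₀ hG₀f hFG₀
    have b := hL G₀ hG₀f F₀ hF₀ hFG₀.symm
    rcases lt_or_gt_of_ne hne₀ with h | h <;> linarith
  have hLip : ∀ G ∈ faces K i, ∀ H ∈ faces K i, f G - f H ≤ L * (fdist K i G H : ℝ) :=
    fun G hG H hH => sub_le_of_chain hL _ G hG H (Nat.sInf_mem (hconn G hG H hH))
  have hd : fdist K i F F' = 1 := fdist_of_conn hF' hC
  have hcost : ∀ ε : ℝ, 0 ≤ ε → ε ≤ 1 →
      (costs K i (pm K w i ε F) (pm K w i ε F')).Nonempty := fun ε h0 h1 =>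
    costs_nonempty (pm_nonneg hi hK hw1 hdeg2 h0 h1 hF) (pm_nonneg hi hK hw1 hdeg2 h0 h1 hF')
      (sum_pm hi hK h2 hw1 hdeg2 ε hF) (sum_pm hi hK h2 hw1 hdeg2 ε hF')
  have hbound : ∀ ε ∈ Set.Ioo (0 : ℝ) 1, kappaEps K w i ε F F' / ε ≤ lam / ((i : ℝ) + 1) := by
    rintro ε ⟨h0, h1⟩
    have h := sub_le_mul_wass hLpos hLip (hcost ε h0.le h1.le)
    rw [sum_pm_mul_eq hi hK hw1 hdeg2 ε hF, sum_pm_mul_eq hi hK hw1 hdeg2 ε hF',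
      hf F hF, hf F' hF'] at h
    have h' : L * (1 - ε * (lam / ((i : ℝ) + 1)))
        ≤ L * Wass K i (pm K w i ε F) (pm K w i ε F') := by
      refine le_trans (le_of_eq ?_) h
      rw [hLdef]
      ring
    have h'' := le_of_mul_le_mul_left h' hLpos
    rw [div_le_iff₀ h0, kappaEps, hd]
    simp only [Nat.cast_one, div_one]
    linarith
  have hanti : AntitoneOn (fun ε => kappaEps K w i ε F F' / ε) (Set.Ioo (0 : ℝ) 1) := by
    rintro ε ⟨h0, h1⟩ δ ⟨hδ0, hδ1⟩ hle
    have h := wass_mul_le (w := w) hF hF' (t := ε / δ) (by positivity)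
      ((div_le_one hδ0).2 hle) (hcost δ hδ0.le hδ1.le)
    rw [div_mul_cancel₀ ε hδ0.ne', hd] at h
    simp only [kappaEps, hd, Nat.cast_one, div_one, mul_one] at h ⊢
    rw [le_div_iff₀ h0]
    have e : (1 - Wass K i (pm K w i δ F) (pm K w i δ F')) / δ * ε
        = ε / δ - ε / δ * Wass K i (pm K w i δ F) (pm K w i δ F') := by ring
    rw [e]
    linarith
  have hlim := hanti.tendsto_nhdsWithin_Ioo_right ⟨1 / 2, by norm_num⟩
    ⟨lam / ((i : ℝ) + 1), by rintro _ ⟨ε, hε, rfl⟩; exact hbound ε hε⟩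
  have hric : ricci K w i F F' ≤ lam / ((i : ℝ) + 1) := by
    rw [ricci, hlim.limUnder_eq]
    refine le_of_tendsto hlim ?_
    filter_upwards [Ioo_mem_nhdsGT (zero_lt_one' ℝ)] with ε hε using hbound ε hε
  have hfin := (hk F hF F' hF' hC).trans hric
  rw [le_div_iff₀ hi0] at hfin
  linarith

end
end SCRicci
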